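/- arXiv:2508.01243 — 2 statements merged into one kernel-verified Lean document; each statement's English description precedes it below -/
import Mathlib

section
/- Let X = (x_1,…,x_n), Y = (y_1,…,y_n) ∈ (ℝ^d)^n and θ ∈ S^{d−1}. Then CW_θ²((1/n)Σ_i δ_{x_i}, (1/n)Σ_j δ_{y_j}) = min over (σ,τ) ∈ Perm_θ(X,Y) of (1/n) Σ_{i=1}^n ‖x_{σ(i)} − y_{τ(i)}‖². -/
open MeasureTheory Filter Topology ProbabilityTheory
open scoped ENNReal RealInnerProductSpace Classical

noncomputable section

/-- Euclidean space ℝ^d. -/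
abbrev Euc (d : ℕ) : Type := EuclideanSpace ℝ (Fin d)

/-- `P2` : Borel probability measures with finite second moment. -/
def P2 {E : Type*} [NormedAddCommGroup E] [MeasurableSpace E] : Set (Measure E) :=
  {μ | IsProbabilityMeasure μ ∧ Integrable (fun x => ‖x‖ ^ 2) μ}

/-- Couplings between two measures. -/
def Coupling {E F : Type*} [MeasurableSpace E] [MeasurableSpace F]
    (μ : Measure E) (ν : Measure F) : Set (Measure (E × F)) :=
  {π | IsProbabilityMeasure π ∧ π.map Prod.fst = μ ∧ π.map Prod.snd = ν}

/-- Quadratic transport cost of a plan. -/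
def tCost {E : Type*} [NormedAddCommGroup E] [MeasurableSpace E]
    (π : Measure (E × E)) : ℝ :=
  ∫ p, ‖p.1 - p.2‖ ^ 2 ∂π

/-- Squared 2-Wasserstein distance. -/
def W2sq {E : Type*} [NormedAddCommGroup E] [MeasurableSpace E] (μ ν : Measure E) : ℝ :=
  sInf (tCost '' Coupling μ ν)

/-- 2-Wasserstein distance. -/
def W2 {E : Type*} [NormedAddCommGroup E] [MeasurableSpace E] (μ ν : Measure E) : ℝ :=
  Real.sqrt (W2sq μ ν)

/-- Optimal transport plans for the quadratic cost. -/
def OptPlan {E : Type*} [NormedAddCommGroup E] [MeasurableSpace E]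
    (μ ν : Measure E) : Set (Measure (E × E)) :=
  {π | π ∈ Coupling μ ν ∧ tCost π = W2sq μ ν}

/-- `Gamma ν μ1 μ2` : probability measures on `E × E × E` whose (1,2)-marginal is an optimal
plan between `ν` and `μ1` and whose (1,3)-marginal is an optimal plan between `ν` and `μ2`. -/
def Gamma {E : Type*} [NormedAddCommGroup E] [MeasurableSpace E]
    (ν μ1 μ2 : Measure E) : Set (Measure (E × E × E)) :=
  {ρ | IsProbabilityMeasure ρ ∧
    ρ.map (fun p => (p.1, p.2.1)) ∈ OptPlan ν μ1 ∧
    ρ.map (fun p => (p.1, p.2.2)) ∈ OptPlan ν μ2}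

/-- Cost `∫ ‖x1 − x2‖² dρ(y, x1, x2)` of a 3-plan. -/
def pivotCost {E : Type*} [NormedAddCommGroup E] [MeasurableSpace E]
    (ρ : Measure (E × E × E)) : ℝ :=
  ∫ p, ‖p.2.1 - p.2.2‖ ^ 2 ∂ρ

/-- Squared ν-based Wasserstein discrepancy. -/
def Wnusq {E : Type*} [NormedAddCommGroup E] [MeasurableSpace E]
    (ν μ1 μ2 : Measure E) : ℝ :=
  sInf (pivotCost '' Gamma ν μ1 μ2)

/-- ν-based Wasserstein discrepancy. -/
def Wnu {E : Type*} [NormedAddCommGroup E] [MeasurableSpace E]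
    (ν μ1 μ2 : Measure E) : ℝ :=
  Real.sqrt (Wnusq ν μ1 μ2)

/-- Weak convergence of a sequence of measures (against bounded continuous functions). -/
def WeakConv {E : Type*} [MeasurableSpace E] [TopologicalSpace E]
    (μs : ℕ → Measure E) (μ : Measure E) : Prop :=
  ∀ f : BoundedContinuousFunction E ℝ,
    Tendsto (fun n => ∫ x, f x ∂(μs n)) atTop (𝓝 (∫ x, f x ∂μ))

/-- Quantile function (pseudo-inverse c.d.f.) of a measure on ℝ. -/
def quantile (ν : Measure ℝ) (t : ℝ) : ℝ :=
  sInf {s : ℝ | ENNReal.ofReal t ≤ ν (Set.Iic s)}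

/-- Pushforward of `μ` by the projection `P_θ : x ↦ ⟪θ, x⟫`. -/
def projLine {d : ℕ} (θ : Euc d) (μ : Measure (Euc d)) : Measure ℝ :=
  μ.map (fun x => ⟪θ, x⟫)

/-- `μ_θ[μ1, μ2]` : the (unique) Wasserstein mean of `Q_θ#μ1` and `Q_θ#μ2`, given by the
explicit quantile formula `[(½ F_{ν1}^{[-1]} + ½ F_{ν2}^{[-1]})·θ]#L_{[0,1]}`. -/
def pivotMiddle {d : ℕ} (θ : Euc d) (μ1 μ2 : Measure (Euc d)) : Measure (Euc d) :=
  (volume.restrict (Set.Icc (0 : ℝ) 1)).map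
    (fun t => ((1 / 2) * quantile (projLine θ μ1) t
      + (1 / 2) * quantile (projLine θ μ2) t) • θ)

/-- Squared Pivot Sliced discrepancy. -/
def PSsq {d : ℕ} (θ : Euc d) (μ1 μ2 : Measure (Euc d)) : ℝ :=
  Wnusq (pivotMiddle θ μ1 μ2) μ1 μ2

/-- Pivot Sliced discrepancy. -/
def PS {d : ℕ} (θ : Euc d) (μ1 μ2 : Measure (Euc d)) : ℝ :=
  Real.sqrt (PSsq θ μ1 μ2)

/-- `π_θ[μ1, μ2]` : the unique optimal 1D plan between `P_θ#μ1` and `P_θ#μ2`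
(co-monotone quantile coupling). -/
def piTheta {d : ℕ} (θ : Euc d) (μ1 μ2 : Measure (Euc d)) : Measure (ℝ × ℝ) :=
  (volume.restrict (Set.Icc (0 : ℝ) 1)).map
    (fun t => (quantile (projLine θ μ1) t, quantile (projLine θ μ2) t))

/-- `Ω_θ(μ1, μ2)` : couplings of `μ1, μ2` whose projection by `(P_θ, P_θ)` is `π_θ[μ1, μ2]`. -/
def OmegaTheta {d : ℕ} (θ : Euc d) (μ1 μ2 : Measure (Euc d)) :
    Set (Measure (Euc d × Euc d)) :=
  {ω | ω ∈ Coupling μ1 μ2 ∧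
    ω.map (fun p => (⟪θ, p.1⟫, ⟪θ, p.2⟫)) = piTheta θ μ1 μ2}

/-- Squared constrained Wasserstein discrepancy `CW_θ²`. -/
def CWsq {d : ℕ} (θ : Euc d) (μ1 μ2 : Measure (Euc d)) : ℝ :=
  sInf (tCost '' OmegaTheta θ μ1 μ2)

/-- Wasserstein means: minimisers of `μ ↦ W₂²(μ1, μ) + W₂²(μ, μ2)` over `P2`. -/
def WMean {d : ℕ} (μ1 μ2 : Measure (Euc d)) : Set (Measure (Euc d)) :=
  {μ | μ ∈ (P2 : Set (Measure (Euc d))) ∧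
    ∀ μ' ∈ (P2 : Set (Measure (Euc d))),
      W2sq μ1 μ + W2sq μ μ2 ≤ W2sq μ1 μ' + W2sq μ' μ2}

/-- Uniform empirical measure `1/n ∑ δ_{x_i}`. -/
def empMeasure {d n : ℕ} (x : Fin n → Euc d) : Measure (Euc d) :=
  (n : ℝ≥0∞)⁻¹ • ∑ i, Measure.dirac (x i)

/-- Pairs of permutations sorting the projections of `X` and `Y`. -/
def PermTheta {d n : ℕ} (θ : Euc d) (x y : Fin n → Euc d) :
    Set (Equiv.Perm (Fin n) × Equiv.Perm (Fin n)) :=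
  {p | Monotone (fun i => (⟪θ, x (p.1 i)⟫ : ℝ)) ∧ Monotone (fun i => (⟪θ, y (p.2 i)⟫ : ℝ))}

def empG {α : Type*} [MeasurableSpace α] {n : ℕ} (z : Fin n → α) : Measure α :=
  (n : ℝ≥0∞)⁻¹ • ∑ i, Measure.dirac (z i)

lemma empG_map {α β : Type*} [MeasurableSpace α] [MeasurableSpace β] {n : ℕ} (z : Fin n → α)
    {f : α → β} (hf : Measurable f) : (empG z).map f = empG (fun i => f (z i)) := by
  unfold empG
  rw [Measure.map_smul]
  congr 1
  ext s hs
  rw [Measure.map_apply hf hs]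
  simp only [Measure.finsetSum_apply, Measure.dirac_apply' _ hs, Measure.dirac_apply' _ (hf hs)]
  rfl

lemma empG_apply {α : Type*} [MeasurableSpace α] {n : ℕ} (z : Fin n → α)
    {s : Set α} (hs : MeasurableSet s) :
    empG z s = (n : ℝ≥0∞)⁻¹ * ((Finset.univ.filter (fun i => z i ∈ s)).card : ℝ≥0∞) := by
  unfold empG
  simp [Measure.finsetSum_apply, Measure.dirac_apply' _ hs, Set.indicator_apply, Finset.sum_boole]

lemma empG_zero {α : Type*} [MeasurableSpace α] {n : ℕ} (z : Fin n → α)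
    {s : Set α} (hs : MeasurableSet s) (h : ∀ i, z i ∉ s) : empG z s = 0 := by
  rw [empG_apply z hs, Finset.filter_false_of_mem (fun i _ => h i)]
  simp

lemma empG_prob {α : Type*} [MeasurableSpace α] {n : ℕ} (hn : 0 < n) (z : Fin n → α) :
    IsProbabilityMeasure (empG z) := by
  constructor
  rw [empG_apply z MeasurableSet.univ]
  simp
  exact ENNReal.inv_mul_cancel (by simpa using hn.ne') (by simp)

lemma empG_perm {α : Type*} [MeasurableSpace α] {n : ℕ} (z : Fin n → α)
    (σ : Equiv.Perm (Fin n)) : empG (fun i => z (σ i)) = empG z := by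
  unfold empG
  rw [Equiv.sum_comp σ (fun i => Measure.dirac (z i))]

lemma quantile_empG {n : ℕ} (hn : 0 < n) (a : Fin n → ℝ) (ha : Monotone a) (k : Fin n) (t : ℝ)
    (ht : t ∈ Set.Ioc ((k : ℝ) / n) (((k : ℝ) + 1) / n)) :
    quantile (empG a) t = a k := by
  have hn' : (0 : ℝ) < n := by exact_mod_cast hn
  have key : {s : ℝ | ENNReal.ofReal t ≤ (empG a) (Set.Iic s)} = Set.Ici (a k) := by
    ext s
    have e : (empG a) (Set.Iic s) =
        ENNReal.ofReal (((Finset.univ.filter (fun i => a i ≤ s)).card : ℝ) / n) := by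
      rw [empG_apply a measurableSet_Iic, ENNReal.ofReal_div_of_pos hn', div_eq_mul_inv, mul_comm]
      simp
    rw [Set.mem_ofPred_eq, e, ENNReal.ofReal_le_ofReal_iff (by positivity), Set.mem_Ici]
    rw [le_div_iff₀ hn']
    have h1 := ht.1
    have h2 := ht.2
    rw [div_lt_iff₀ hn'] at h1
    rw [le_div_iff₀ hn'] at h2
    constructor
    · intro h
      by_contra! hs
      have : (Finset.univ.filter (fun i => a i ≤ s)).card ≤ (Finset.Iio k).card := by
        apply Finset.card_le_card
        intro i hi
        simp only [Finset.mem_filter, Finset.mem_univ, true_and] at hi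
        rw [Finset.mem_Iio]
        by_contra! hk
        exact absurd (ha hk) (by linarith)
      rw [Fin.card_Iio] at this
      have : ((Finset.univ.filter (fun i => a i ≤ s)).card : ℝ) ≤ (k : ℝ) := by exact_mod_cast this
      linarith
    · intro hs
      have : (Finset.Iic k).card ≤ (Finset.univ.filter (fun i => a i ≤ s)).card := by
        apply Finset.card_le_card
        intro i hi
        simp only [Finset.mem_filter, Finset.mem_univ, true_and]
        rw [Finset.mem_Iic] at hi
        exact (ha hi).trans hs
      rw [Fin.card_Iic] at this
      have : (k : ℝ) + 1 ≤ ((Finset.univ.filter (fun i => a i ≤ s)).card : ℝ) := by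
        exact_mod_cast this
      linarith
  rw [quantile, key, csInf_Ici]

lemma Ioc_split {n : ℕ} (hn : 0 < n) :
    Set.Ioc (0 : ℝ) 1 = ⋃ k : Fin n, Set.Ioc ((k : ℝ) / n) (((k : ℝ) + 1) / n) := by
  have hn' : (0 : ℝ) < n := by exact_mod_cast hn
  ext t
  simp only [Set.mem_Ioc, Set.mem_iUnion, div_lt_iff₀ hn', le_div_iff₀ hn']
  constructor
  · rintro ⟨h0, h1⟩
    have hp : 0 < t * n := by positivity
    have hc : 0 < ⌈t * n⌉₊ := Nat.ceil_pos.2 hp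
    have hcn : ⌈t * n⌉₊ ≤ n := by
      apply Nat.ceil_le.2
      nlinarith
    refine ⟨⟨⌈t * n⌉₊ - 1, by omega⟩, ?_, ?_⟩
    · have := Nat.ceil_lt_add_one hp.le
      simp only [Nat.cast_sub (show 1 ≤ ⌈t * n⌉₊ from hc)]
      push_cast
      linarith
    · have := Nat.le_ceil (t * n)
      simp only [Nat.cast_sub (show 1 ≤ ⌈t * n⌉₊ from hc)]
      push_cast
      linarith
  · rintro ⟨k, h1, h2⟩
    have hk : (k : ℝ) + 1 ≤ n := by exact_mod_cast k.2
    have hk0 : (0 : ℝ) ≤ (k : ℕ) := by positivity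
    constructor
    · by_contra! h
      nlinarith
    · by_contra! h
      nlinarith

lemma map_quantile {n : ℕ} (hn : 0 < n) {β : Type*} [MeasurableSpace β] (f : ℝ → β)
    (z : Fin n → β)
    (h : ∀ k : Fin n, ∀ t ∈ Set.Ioc ((k : ℝ) / n) (((k : ℝ) + 1) / n), f t = z k) :
    (volume.restrict (Set.Icc (0 : ℝ) 1)).map f = empG z := by
  have hn' : (0 : ℝ) < n := by exact_mod_cast hn
  have hd : Pairwise (Function.onFun Disjoint
      (fun k : Fin n => Set.Ioc ((k : ℝ) / n) (((k : ℝ) + 1) / n))) := by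
    intro i j hij
    rw [Function.onFun, Set.disjoint_left]
    intro t h1 h2
    simp only [Set.mem_Ioc, div_lt_iff₀ hn', le_div_iff₀ hn'] at h1 h2
    apply hij
    have a1 : (i : ℝ) < j + 1 := by linarith
    have a2 : (j : ℝ) < i + 1 := by linarith
    have b1 : (i : ℕ) < j + 1 := by exact_mod_cast a1
    have b2 : (j : ℕ) < i + 1 := by exact_mod_cast a2
    ext
    omega
  have hae : ∀ k : Fin n, f =ᵐ[volume.restrict (Set.Ioc ((k : ℝ) / n) (((k : ℝ) + 1) / n))]
      (fun _ => z k) := by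
    intro k
    filter_upwards [ae_restrict_mem measurableSet_Ioc] with t ht using h k t ht
  rw [← restrict_Ioc_eq_restrict_Icc, Ioc_split hn,
    Measure.restrict_iUnion hd (fun _ => measurableSet_Ioc), Measure.map_sum]
  · rw [Measure.sum_fintype, empG, Finset.smul_sum]
    refine Finset.sum_congr rfl fun k _ => ?_
    rw [Measure.map_congr (hae k), Measure.map_const]
    congr 1
    rw [Measure.restrict_apply_univ, Real.volume_Ioc, ← sub_div, add_sub_cancel_left,
      ENNReal.ofReal_div_of_pos hn']
    simp
  · rw [aemeasurable_sum_measure_iff]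
    intro k
    exact (aemeasurable_const (b := z k)).congr (hae k).symm

lemma empMeasure_eq {d n : ℕ} (x : Fin n → Euc d) : empMeasure x = empG x := rfl

lemma meas_proj {d : ℕ} (θ : Euc d) : Measurable (fun x : Euc d => (⟪θ, x⟫ : ℝ)) :=
  (continuous_const.inner continuous_id).measurable

lemma piTheta_eq {d n : ℕ} (hn : 0 < n) (x y : Fin n → Euc d) (θ : Euc d)
    (p : Equiv.Perm (Fin n) × Equiv.Perm (Fin n)) (hp : p ∈ PermTheta θ x y) :
    piTheta θ (empMeasure x) (empMeasure y) =
      empG (fun k => ((⟪θ, x (p.1 k)⟫ : ℝ), (⟪θ, y (p.2 k)⟫ : ℝ))) := by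
  unfold piTheta
  apply map_quantile hn
  intro k t ht
  have e : ∀ (w : Fin n → Euc d) (σ : Equiv.Perm (Fin n)),
      projLine θ (empMeasure w) = empG (fun i => (⟪θ, w (σ i)⟫ : ℝ)) := by
    intro w σ
    rw [projLine, empMeasure_eq, empG_map _ (meas_proj θ),
      empG_perm (fun i => (⟪θ, w i⟫ : ℝ)) σ]
  rw [e x p.1, e y p.2, quantile_empG hn _ hp.1 k t ht, quantile_empG hn _ hp.2 k t ht]

lemma tCost_empG {d n : ℕ} (z : Fin n → Euc d × Euc d) :
    tCost (empG z) = (1 / (n : ℝ)) * ∑ i, ‖(z i).1 - (z i).2‖ ^ 2 := by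
  unfold tCost empG
  rw [integral_smul_measure, integral_finsetSum_measure]
  · simp
  · intro i _
    exact integrable_dirac (by simp)

lemma empG_mem_Omega {d n : ℕ} (hn : 0 < n) (x y : Fin n → Euc d) (θ : Euc d)
    (p : Equiv.Perm (Fin n) × Equiv.Perm (Fin n)) (hp : p ∈ PermTheta θ x y) :
    empG (fun k => (x (p.1 k), y (p.2 k))) ∈ OmegaTheta θ (empMeasure x) (empMeasure y) := by
  refine ⟨⟨empG_prob hn _, ?_, ?_⟩, ?_⟩
  · rw [empG_map _ measurable_fst]
    exact empG_perm x p.1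
  · rw [empG_map _ measurable_snd]
    exact empG_perm y p.2
  · rw [piTheta_eq hn x y θ p hp, empG_map]
    exact ((meas_proj θ).comp measurable_fst).prodMk ((meas_proj θ).comp measurable_snd)

lemma exists_perm {d n : ℕ} (x y : Fin n → Euc d) (θ : Euc d) (ρ : Equiv.Perm (Fin n))
    (h : ∀ i j, (⟪θ, x i⟫ : ℝ) < ⟪θ, x j⟫ → (⟪θ, y (ρ i)⟫ : ℝ) ≤ ⟪θ, y (ρ j)⟫) :
    ∃ p ∈ PermTheta θ x y, ∑ i, ‖x (p.1 i) - y (p.2 i)‖ ^ 2 = ∑ i, ‖x i - y (ρ i)‖ ^ 2 := by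
  let f : Fin n → ℝ ×ₗ ℝ := fun i => toLex ((⟪θ, x i⟫ : ℝ), (⟪θ, y (ρ i)⟫ : ℝ))
  have hm : Monotone (f ∘ Tuple.sort f) := Tuple.monotone_sort f
  refine ⟨(Tuple.sort f, (Tuple.sort f).trans ρ), ⟨?_, ?_⟩, ?_⟩
  · intro i j hij
    have := hm hij
    simp only [f, Function.comp, Prod.Lex.toLex_le_toLex] at this
    rcases this with h1 | ⟨h1, h2⟩
    · exact h1.le
    · exact h1.le
  · intro i j hij
    have := hm hij
    simp only [f, Function.comp, Prod.Lex.toLex_le_toLex] at this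
    rcases this with h1 | ⟨h1, h2⟩
    · exact h _ _ h1
    · exact h2
  · exact Equiv.sum_comp (Tuple.sort f) (fun i => ‖x i - y (ρ i)‖ ^ 2)

lemma sum_div_mult {α : Type*} [DecidableEq α] {n : ℕ} (y : Fin n → α) (F : α → ℝ) :
    ∑ j, F (y j) / ((Finset.univ.filter (fun i => y i = y j)).card : ℝ) =
      ∑ v ∈ Finset.univ.image y, F v := by
  rw [Finset.sum_comp (fun v => F v / ((Finset.univ.filter (fun i => y i = v)).card : ℝ)) y]
  refine Finset.sum_congr rfl fun v hv => ?_
  obtain ⟨j, -, rfl⟩ := Finset.mem_image.1 hv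
  have : ((Finset.univ.filter (fun i => y i = y j)).card : ℝ) ≠ 0 := by
    have : j ∈ Finset.univ.filter (fun i => y i = y j) := by simp
    exact_mod_cast (Finset.card_pos.2 ⟨j, this⟩).ne'
  rw [nsmul_eq_mul]
  field_simp

lemma empG_real_singleton {α : Type*} [DecidableEq α] [MeasurableSpace α] [MeasurableSingletonClass α] {n : ℕ}
    (z : Fin n → α) (v : α) :
    (empG z).real {v} = ((Finset.univ.filter (fun i => z i = v)).card : ℝ) / n := by
  rw [measureReal_def, empG_apply z (measurableSet_singleton v)]
  simp [div_eq_mul_inv, mul_comm]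

lemma omega_compl {d n : ℕ} (x y : Fin n → Euc d) (ω : Measure (Euc d × Euc d))
    (hω : ω ∈ Coupling (empMeasure x) (empMeasure y)) :
    ∀ᵐ p ∂ω, p.1 ∈ Finset.univ.image x ∧ p.2 ∈ Finset.univ.image y := by
  have aux : ∀ (w : Fin n → Euc d), ∀ᵐ v ∂(empG w), v ∈ Finset.univ.image w := by
    intro w
    have hms : MeasurableSet ((Finset.univ.image w : Finset (Euc d)) : Set (Euc d))ᶜ :=
      (Finset.measurableSet _).compl
    have : empG w ((Finset.univ.image w : Finset (Euc d)) : Set (Euc d))ᶜ = 0 := by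
      rw [empG_apply w hms]
      simp
    exact this
  obtain ⟨-, h1, h2⟩ := hω
  have a1 : ∀ᵐ p ∂ω, p.1 ∈ Finset.univ.image x :=
    ae_of_ae_map measurable_fst.aemeasurable (by rw [h1]; exact aux x)
  have a2 : ∀ᵐ p ∂ω, p.2 ∈ Finset.univ.image y :=
    ae_of_ae_map measurable_snd.aemeasurable (by rw [h2]; exact aux y)
  exact a1.and a2

lemma integral_omega {d n : ℕ} (x y : Fin n → Euc d) (ω : Measure (Euc d × Euc d))
    (hω : ω ∈ Coupling (empMeasure x) (empMeasure y)) (g : Euc d × Euc d → ℝ) :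
    ∫ p, g p ∂ω = ∑ u ∈ Finset.univ.image x, ∑ v ∈ Finset.univ.image y,
      ω.real {(u, v)} * g (u, v) := by
  have := hω.1
  have h : ω.restrict (↑(Finset.univ.image x ×ˢ Finset.univ.image y) : Set (Euc d × Euc d)) = ω := by
    apply Measure.restrict_eq_self_of_ae_mem
    filter_upwards [omega_compl x y ω hω] with p hp
    simpa using hp
  rw [← Finset.sum_product', ← h, setIntegral_finset _ IntegrableOn.finset, h]
  rfl

lemma row_sum {d n : ℕ} (x y : Fin n → Euc d) (ω : Measure (Euc d × Euc d))
    (hω : ω ∈ Coupling (empMeasure x) (empMeasure y)) (u : Euc d) :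
    ∑ v ∈ Finset.univ.image y, ω.real {(u, v)} =
      ((Finset.univ.filter (fun i => x i = u)).card : ℝ) / n := by
  have := hω.1
  rw [← empG_real_singleton, ← empMeasure_eq, ← hω.2.1,
    map_measureReal_apply measurable_fst (measurableSet_singleton u)]
  have e : (↑((Finset.univ.image y).image (fun v => (u, v))) : Set (Euc d × Euc d)) =ᵐ[ω]
      (Prod.fst ⁻¹' {u}) := by
    filter_upwards [omega_compl x y ω hω] with p hp
    apply propext
    obtain ⟨p1, p2⟩ := p
    have h2 := hp.2
    simp only [Finset.mem_image, Finset.mem_univ, true_and] at h2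
    change ((p1, p2) ∈ (↑((Finset.univ.image y).image (fun v => (u, v))) : Set (Euc d × Euc d)))
      ↔ (p1 = u)
    obtain ⟨a, rfl⟩ := h2
    simp [eq_comm]
  rw [← measureReal_congr e, ← sum_measureReal_singleton,
    Finset.sum_image (s := Finset.univ.image y) (g := fun v => (u, v))]
  intro a _ b _ hab
  exact (Prod.mk.inj hab).2

lemma col_sum {d n : ℕ} (x y : Fin n → Euc d) (ω : Measure (Euc d × Euc d))
    (hω : ω ∈ Coupling (empMeasure x) (empMeasure y)) (v : Euc d) :
    ∑ u ∈ Finset.univ.image x, ω.real {(u, v)} =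
      ((Finset.univ.filter (fun i => y i = v)).card : ℝ) / n := by
  have := hω.1
  rw [← empG_real_singleton, ← empMeasure_eq, ← hω.2.2,
    map_measureReal_apply measurable_snd (measurableSet_singleton v)]
  have e : (↑((Finset.univ.image x).image (fun u => (u, v))) : Set (Euc d × Euc d)) =ᵐ[ω]
      (Prod.snd ⁻¹' {v}) := by
    filter_upwards [omega_compl x y ω hω] with p hp
    apply propext
    obtain ⟨p1, p2⟩ := p
    have h2 := hp.1
    simp only [Finset.mem_image, Finset.mem_univ, true_and] at h2
    change ((p1, p2) ∈ (↑((Finset.univ.image x).image (fun u => (u, v))) : Set (Euc d × Euc d)))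
      ↔ (p2 = v)
    obtain ⟨a, rfl⟩ := h2
    simp [eq_comm]
  rw [← measureReal_congr e, ← sum_measureReal_singleton,
    Finset.sum_image (s := Finset.univ.image x) (g := fun u => (u, v))]
  intro a _ b _ hab
  exact (Prod.mk.inj hab).1

lemma omega_mono {d n : ℕ} (hn : 0 < n) (x y : Fin n → Euc d) (θ : Euc d)
    (p : Equiv.Perm (Fin n) × Equiv.Perm (Fin n)) (hp : p ∈ PermTheta θ x y)
    (ω : Measure (Euc d × Euc d)) (hω : ω ∈ OmegaTheta θ (empMeasure x) (empMeasure y))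
    (u v u' v' : Euc d) (h : ω.real {(u, v)} ≠ 0) (h' : ω.real {(u', v')} ≠ 0)
    (hlt : (⟪θ, u⟫ : ℝ) < ⟪θ, u'⟫) : (⟪θ, v⟫ : ℝ) ≤ ⟪θ, v'⟫ := by
  have hm : Measurable (fun p : Euc d × Euc d => ((⟪θ, p.1⟫ : ℝ), (⟪θ, p.2⟫ : ℝ))) :=
    ((meas_proj θ).comp measurable_fst).prodMk ((meas_proj θ).comp measurable_snd)
  have key : ∀ u v : Euc d, ω.real {(u, v)} ≠ 0 →
      ∃ k, (⟪θ, x (p.1 k)⟫ : ℝ) = ⟪θ, u⟫ ∧ (⟪θ, y (p.2 k)⟫ : ℝ) = ⟪θ, v⟫ := by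
    intro u v huv
    by_contra! hc
    apply huv
    have h2 := hω.2
    rw [piTheta_eq hn x y θ p hp] at h2
    have h0 : (empG (fun k => ((⟪θ, x (p.1 k)⟫ : ℝ), (⟪θ, y (p.2 k)⟫ : ℝ))))
        {((⟪θ, u⟫ : ℝ), (⟪θ, v⟫ : ℝ))} = 0 := by
      apply empG_zero _ (measurableSet_singleton _)
      intro k hk
      have hk' := Prod.mk.inj hk
      exact hc k hk'.1 hk'.2
    rw [← h2, Measure.map_apply hm (measurableSet_singleton _)] at h0
    have : ω {(u, v)} = 0 := by
      refine measure_mono_null ?_ h0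
      rintro _ rfl
      rfl
    simp [measureReal_def, this]
  obtain ⟨k, hk1, hk2⟩ := key u v h
  obtain ⟨l, hl1, hl2⟩ := key u' v' h'
  rw [← hk2, ← hl2]
  rw [← hk1, ← hl1] at hlt
  apply hp.2
  by_contra! hlk
  exact absurd (hp.1 hlk.le) (not_le.2 hlt)

lemma lower_bound {d n : ℕ} (hn : 0 < n) (x y : Fin n → Euc d) (θ : Euc d)
    (p : Equiv.Perm (Fin n) × Equiv.Perm (Fin n)) (hp : p ∈ PermTheta θ x y)
    (hmin : ∀ q ∈ PermTheta θ x y, ∑ i, ‖x (p.1 i) - y (p.2 i)‖ ^ 2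
      ≤ ∑ i, ‖x (q.1 i) - y (q.2 i)‖ ^ 2)
    (ω : Measure (Euc d × Euc d)) (hω : ω ∈ OmegaTheta θ (empMeasure x) (empMeasure y)) :
    (1 / (n : ℝ)) * ∑ i, ‖x (p.1 i) - y (p.2 i)‖ ^ 2 ≤ tCost ω := by
  have hn' : (0 : ℝ) < n := by exact_mod_cast hn
  let mx : Fin n → ℝ := fun i => ((Finset.univ.filter (fun k => x k = x i)).card : ℝ)
  let my : Fin n → ℝ := fun j => ((Finset.univ.filter (fun k => y k = y j)).card : ℝ)
  have hmx : ∀ i, 0 < mx i := fun i => by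
    have : i ∈ Finset.univ.filter (fun k => x k = x i) := by simp
    exact Nat.cast_pos.2 (Finset.card_pos.2 ⟨i, this⟩)
  have hmy : ∀ i, 0 < my i := fun i => by
    have : i ∈ Finset.univ.filter (fun k => y k = y i) := by simp
    exact Nat.cast_pos.2 (Finset.card_pos.2 ⟨i, this⟩)
  let M : Matrix (Fin n) (Fin n) ℝ := fun i j => n * (ω.real {(x i, y j)} / my j / mx i)
  have hM : M ∈ doublyStochastic ℝ (Fin n) := by
    rw [mem_doublyStochastic_iff_sum]
    refine ⟨fun i j => ?_, fun i => ?_, fun j => ?_⟩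
    · have := hmx i
      have := hmy j
      simp only [M]
      positivity
    · simp only [M]
      rw [← Finset.mul_sum, ← Finset.sum_div,
        show ∑ j, ω.real {(x i, y j)} / my j = _ from sum_div_mult y (fun v => ω.real {(x i, v)}), row_sum x y ω hω.1]
      have := (hmx i).ne'
      change (n : ℝ) * (mx i / n / mx i) = 1
      field_simp
    · simp only [M]
      have e : ∀ i, ω.real {(x i, y j)} / my j / mx i = ω.real {(x i, y j)} / mx i / my j :=
        fun i => div_right_comm _ _ _
      simp only [e]
      rw [← Finset.mul_sum, ← Finset.sum_div,
        show ∑ i, ω.real {(x i, y j)} / mx i = _ from sum_div_mult x (fun u => ω.real {(u, y j)}), col_sum x y ω hω.1]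
      have := (hmy j).ne'
      change (n : ℝ) * (my j / n / my j) = 1
      field_simp
  have hcost : ∑ i, ∑ j, M i j * ‖x i - y j‖ ^ 2 = n * tCost ω := by
    rw [tCost, integral_omega x y ω hω.1, ← sum_div_mult x, Finset.mul_sum]
    refine Finset.sum_congr rfl fun i _ => ?_
    rw [← sum_div_mult y, Finset.sum_div, Finset.mul_sum]
    refine Finset.sum_congr rfl fun j _ => ?_
    simp only [M, mx, my]
    ring
  obtain ⟨w, hw0, hw1, hwM⟩ := exists_eq_sum_perm_of_mem_doublyStochastic hM
  have hMij : ∀ i j, M i j = ∑ ρ, w ρ * (if ρ i = j then 1 else 0) := by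
    intro i j
    rw [← hwM, Matrix.sum_apply]
    refine Finset.sum_congr rfl fun ρ _ => ?_
    simp [Equiv.Perm.permMatrix, PEquiv.toMatrix_apply, Equiv.toPEquiv_apply, eq_comm]
  have hcost2 : ∑ i, ∑ j, M i j * ‖x i - y j‖ ^ 2 = ∑ ρ, w ρ * ∑ i, ‖x i - y (ρ i)‖ ^ 2 := by
    have e : ∀ i, ∑ j, M i j * ‖x i - y j‖ ^ 2 = ∑ ρ, w ρ * ‖x i - y (ρ i)‖ ^ 2 := by
      intro i
      simp only [hMij, Finset.sum_mul]
      rw [Finset.sum_comm]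
      refine Finset.sum_congr rfl fun ρ _ => ?_
      simp
    simp only [e, Finset.mul_sum]
    rw [Finset.sum_comm]
  have hρ : ∀ ρ, w ρ * ∑ i, ‖x (p.1 i) - y (p.2 i)‖ ^ 2 ≤ w ρ * ∑ i, ‖x i - y (ρ i)‖ ^ 2 := by
    intro ρ
    rcases (hw0 ρ).eq_or_lt with h0 | h0
    · rw [← h0]; simp
    · apply mul_le_mul_of_nonneg_left _ h0.le
      have hne : ∀ i, ω.real {(x i, y (ρ i))} ≠ 0 := by
        intro i hi
        have h1 : M i (ρ i) = 0 := by simp [M, hi]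
        have h2 : w ρ ≤ M i (ρ i) := by
          rw [hMij]
          have := Finset.single_le_sum (f := fun ρ' => w ρ' * (if ρ' i = ρ i then (1 : ℝ) else 0))
            (fun ρ' _ => mul_nonneg (hw0 ρ') (by split_ifs <;> norm_num)) (Finset.mem_univ ρ)
          simpa using this
        linarith
      obtain ⟨q, hq, hqe⟩ := exists_perm x y θ ρ (fun i j hij =>
        omega_mono hn x y θ p hp ω hω _ _ _ _ (hne i) (hne j) hij)
      rw [← hqe]
      exact hmin q hq
  have := Finset.sum_le_sum (fun ρ (_ : ρ ∈ Finset.univ) => hρ ρ)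
  rw [← Finset.sum_mul, hw1, one_mul, ← hcost2, hcost] at this
  rw [one_div, inv_mul_le_iff₀ hn']
  exact this

/-- Monge formulation of `CW_θ²` between point clouds: it equals the
minimum over sorting permutation pairs `(σ, τ) ∈ Perm_θ(X, Y)` of the matching cost,
and this minimum is attained. -/
theorem CWsq_discrete_monge {d n : ℕ} (hn : 0 < n)
    (x y : Fin n → Euc d) (θ : Euc d) (hθ : ‖θ‖ = 1) :
    ∃ p ∈ PermTheta θ x y,
      CWsq θ (empMeasure x) (empMeasure y)
          = (1 / (n : ℝ)) * ∑ i, ‖x (p.1 i) - y (p.2 i)‖ ^ 2 ∧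
      ∀ q ∈ PermTheta θ x y,
        (1 / (n : ℝ)) * ∑ i, ‖x (p.1 i) - y (p.2 i)‖ ^ 2
          ≤ (1 / (n : ℝ)) * ∑ i, ‖x (q.1 i) - y (q.2 i)‖ ^ 2 := by
  have hne : (PermTheta θ x y).Nonempty :=
    ⟨(Tuple.sort (fun i => (⟪θ, x i⟫ : ℝ)), Tuple.sort (fun i => (⟪θ, y i⟫ : ℝ))),
      Tuple.monotone_sort (fun i => (⟪θ, x i⟫ : ℝ)), Tuple.monotone_sort (fun i => (⟪θ, y i⟫ : ℝ))⟩
  obtain ⟨p, hp, hmin⟩ := Set.exists_min_image (PermTheta θ x y)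
    (fun q => ∑ i, ‖x (q.1 i) - y (q.2 i)‖ ^ 2) (Set.toFinite _) hne
  refine ⟨p, hp, ?_, fun q hq => mul_le_mul_of_nonneg_left (hmin q hq) (by positivity)⟩
  apply IsLeast.csInf_eq
  refine ⟨⟨_, empG_mem_Omega hn x y θ p hp, tCost_empG _⟩, ?_⟩
  rintro _ ⟨ω, hω, rfl⟩
  exact lower_bound hn x y θ p hp hmin ω hω

end
end

section
/- Fix θ ∈ S^{d−1}. The lifted cost LS_θ on P_2(ℝ^d) is non-negative, symmetric, satisfies the triangle inequality LS_θ(μ1, μ3) ≤ LS_θ(μ1, μ2) + LS_θ(μ2, μ3) for all μ1, μ2, μ3 ∈ P_2(ℝ^d), satisfies LS_θ(μ1, μ2) ≥ W_2(μ1, μ2), and if LS_θ(μ1, μ2) = 0 then μ1 = μ2. -/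
open MeasureTheory Filter Topology ProbabilityTheory
open scoped ENNReal RealInnerProductSpace Classical

noncomputable section

/-- The pushforward of `μ` by `x ↦ (⟪θ, x⟫, x)`, used to disintegrate `μ` along `P_θ`. -/
def slicePair {d : ℕ} (θ : Euc d) (μ : Measure (Euc d)) : Measure (ℝ × Euc d) :=
  μ.map (fun x => ((⟪θ, x⟫ : ℝ), x))

/-- The lifted plan `γ_θ[μ1, μ2]`: the 1D optimal plan `π_θ[μ1, μ2]` on the projections,
with the conditional measures of `μ1` and `μ2` on the slices coupled independently. -/
def liftedPlan {d : ℕ} (θ : Euc d) (μ1 μ2 : Measure (Euc d))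
    [IsFiniteMeasure μ1] [IsFiniteMeasure μ2] : Measure (Euc d × Euc d) :=
  haveI : IsFiniteMeasure (slicePair θ μ1) := Measure.isFiniteMeasure_map μ1 _
  haveI : IsFiniteMeasure (slicePair θ μ2) := Measure.isFiniteMeasure_map μ2 _
  (piTheta θ μ1 μ2).bind fun st =>
    ((slicePair θ μ1).condKernel st.1).prod ((slicePair θ μ2).condKernel st.2)

/-- Squared lifted cost `LS_θ²`. -/
def LSsq {d : ℕ} (θ : Euc d) (μ1 μ2 : Measure (Euc d))
    [IsFiniteMeasure μ1] [IsFiniteMeasure μ2] : ℝ :=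
  ∫ p, ‖p.1 - p.2‖ ^ 2 ∂(liftedPlan θ μ1 μ2)

/-- Lifted cost `LS_θ`. -/
def LS {d : ℕ} (θ : Euc d) (μ1 μ2 : Measure (Euc d))
    [IsFiniteMeasure μ1] [IsFiniteMeasure μ2] : ℝ :=
  Real.sqrt (LSsq θ μ1 μ2)

lemma ofReal_le_Iic_iff (ν : Measure ℝ) [IsProbabilityMeasure ν] (t s : ℝ) :
    ENNReal.ofReal t ≤ ν (Set.Iic s) ↔ t ≤ cdf ν s := by
  rw [← ofReal_cdf ν s, ENNReal.ofReal_le_ofReal_iff (cdf_nonneg ν s)]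

lemma quantile_le_iff (ν : Measure ℝ) [IsProbabilityMeasure ν] {t : ℝ}
    (ht : t ∈ Set.Ioo (0 : ℝ) 1) (s : ℝ) : quantile ν t ≤ s ↔ t ≤ cdf ν s := by
  unfold quantile
  simp only [ofReal_le_Iic_iff]
  have hne : {s : ℝ | t ≤ cdf ν s}.Nonempty := by
    obtain ⟨s, hs⟩ := ((tendsto_cdf_atTop ν).eventually (lt_mem_nhds ht.2)).exists
    exact ⟨s, hs.le⟩
  have hbdd : BddBelow {s : ℝ | t ≤ cdf ν s} := by
    obtain ⟨a, ha⟩ := ((tendsto_cdf_atBot ν).eventually (gt_mem_nhds ht.1)).exists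
    refine ⟨a, fun s hs => ?_⟩
    by_contra! h
    have := monotone_cdf ν h.le
    have hs' : t ≤ cdf ν s := hs
    linarith
  constructor
  · intro h
    have hr : Tendsto (cdf ν) (𝓝[>] s) (𝓝 (cdf ν s)) :=
      ((cdf ν).right_continuous s).mono_left (nhdsWithin_mono _ Set.Ioi_subset_Ici_self)
    refine ge_of_tendsto hr ?_
    filter_upwards [self_mem_nhdsWithin] with s' hs'
    obtain ⟨a, ha, has⟩ := exists_lt_of_csInf_lt hne (lt_of_le_of_lt h hs')
    exact le_trans ha (monotone_cdf ν has.le)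
  · intro h
    exact csInf_le hbdd h

lemma restr_eq : (volume.restrict (Set.Icc (0 : ℝ) 1)) = volume.restrict (Set.Ioo (0 : ℝ) 1) :=
  Measure.restrict_congr_set Ioo_ae_eq_Icc.symm

instance restr_prob : IsProbabilityMeasure (volume.restrict (Set.Icc (0 : ℝ) 1)) :=
  ⟨by simp⟩

lemma aemeasurable_quantile (ν : Measure ℝ) [IsProbabilityMeasure ν] :
    AEMeasurable (quantile ν) (volume.restrict (Set.Icc (0 : ℝ) 1)) := by
  rw [restr_eq]
  refine aemeasurable_restrict_of_monotoneOn measurableSet_Ioo ?_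
  intro a ha b hb hab
  rw [quantile_le_iff ν ha]
  exact hab.trans ((quantile_le_iff ν hb _).1 le_rfl)

lemma map_quantile_s19 (ν : Measure ℝ) [IsProbabilityMeasure ν] :
    (volume.restrict (Set.Icc (0 : ℝ) 1)).map (quantile ν) = ν := by
  have := Measure.isProbabilityMeasure_map (aemeasurable_quantile ν)
  refine Measure.ext_of_Iic _ _ fun s => ?_
  rw [Measure.map_apply_of_aemeasurable (aemeasurable_quantile ν) measurableSet_Iic]
  have h1 : (volume.restrict (Set.Icc (0 : ℝ) 1)) (quantile ν ⁻¹' Set.Iic s)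
      = (volume.restrict (Set.Icc (0 : ℝ) 1)) (Set.Iic (cdf ν s)) := by
    apply measure_congr
    rw [restr_eq]
    filter_upwards [ae_restrict_mem measurableSet_Ioo] with t ht
    exact propext (quantile_le_iff ν ht s)
  rw [h1, Measure.restrict_congr_set (Ioc_ae_eq_Icc (μ := volume)).symm,
    Measure.restrict_apply measurableSet_Iic, ← ofReal_cdf ν s]
  have h2 : Set.Iic (cdf ν s) ∩ Set.Ioc 0 1 = Set.Ioc 0 (cdf ν s) := by
    ext t
    have := cdf_le_one ν s
    simp only [Set.mem_inter_iff, Set.mem_Iic, Set.mem_Ioc]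
    constructor
    · rintro ⟨a, b, c⟩; exact ⟨b, a⟩
    · rintro ⟨a, b⟩; exact ⟨b, a, b.trans this⟩
  rw [h2]; simp

/-- The unit interval measure. -/
abbrev UU : Measure ℝ := volume.restrict (Set.Icc (0 : ℝ) 1)

/-- conditional kernel along the quantile parametrisation -/
lemma exists_kernel {d : ℕ} (θ : Euc d) (μ : Measure (Euc d)) [IsFiniteMeasure μ]
    [IsProbabilityMeasure μ] [IsFiniteMeasure (slicePair θ μ)] :
    ∃ k : Kernel ℝ (Euc d), IsMarkovKernel k ∧
      AEMeasurable (quantile (projLine θ μ)) UU ∧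
      (∀ᵐ t ∂UU, k t = (slicePair θ μ).condKernel (quantile (projLine θ μ) t)) ∧
      UU.bind k = μ := by
  have hm : Measurable (fun x : Euc d => (⟪θ, x⟫ : ℝ)) := by fun_prop
  have : IsProbabilityMeasure (projLine θ μ) := Measure.isProbabilityMeasure_map hm.aemeasurable
  have hq := aemeasurable_quantile (projLine θ μ)
  refine ⟨(slicePair θ μ).condKernel.comap (hq.mk _) hq.measurable_mk, inferInstance, hq, ?_, ?_⟩
  · filter_upwards [hq.ae_eq_mk] with t ht
    rw [Kernel.comap_apply, ht]
  · have h1 : UU.bind ((slicePair θ μ).condKernel.comap (hq.mk _) hq.measurable_mk)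
        = (UU.map (hq.mk _)).bind (slicePair θ μ).condKernel := by
      ext s hs
      rw [Measure.bind_apply hs (Kernel.aemeasurable _), Measure.bind_apply hs (Kernel.aemeasurable _),
        lintegral_map (Kernel.measurable_coe _ hs) hq.measurable_mk]
      rfl
    rw [h1, ← Measure.map_congr hq.ae_eq_mk, map_quantile_s19]
    have h2 : projLine θ μ = (slicePair θ μ).fst := by
      unfold projLine slicePair
      exact (Measure.fst_map_prodMk measurable_id).symm
    rw [h2, ← Measure.snd_compProd, Measure.disintegrate]
    unfold slicePair
    exact (Measure.snd_map_prodMk hm).trans Measure.map_id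

lemma liftedPlan_eq {d : ℕ} (θ : Euc d) (μ1 μ2 : Measure (Euc d))
    [IsFiniteMeasure μ1] [IsFiniteMeasure μ2]
    [IsFiniteMeasure (slicePair θ μ1)] [IsFiniteMeasure (slicePair θ μ2)]
    (k1 k2 : Kernel ℝ (Euc d)) [IsMarkovKernel k1] [IsMarkovKernel k2]
    (hq1 : AEMeasurable (quantile (projLine θ μ1)) UU)
    (hq2 : AEMeasurable (quantile (projLine θ μ2)) UU)
    (h1 : ∀ᵐ t ∂UU, k1 t = (slicePair θ μ1).condKernel (quantile (projLine θ μ1) t))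
    (h2 : ∀ᵐ t ∂UU, k2 t = (slicePair θ μ2).condKernel (quantile (projLine θ μ2) t)) :
    liftedPlan θ μ1 μ2 = UU.bind (k1 ×ₖ k2) := by
  have hk : (fun st : ℝ × ℝ =>
      ((slicePair θ μ1).condKernel st.1).prod ((slicePair θ μ2).condKernel st.2))
      = ((slicePair θ μ1).condKernel ∥ₖ (slicePair θ μ2).condKernel) := by
    ext st : 1
    rw [Kernel.parallelComp_apply]
  unfold liftedPlan piTheta
  ext s hs
  rw [hk, Measure.bind_apply hs (Kernel.aemeasurable _), Measure.bind_apply hs (Kernel.aemeasurable _),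
    lintegral_map' (Kernel.measurable_coe _ hs).aemeasurable (hq1.prodMk hq2)]
  apply lintegral_congr_ae
  filter_upwards [h1, h2] with t ht1 ht2
  rw [Kernel.parallelComp_apply, Kernel.prod_apply, ht1, ht2]

lemma sqrt_eq_eLpNorm {d : ℕ} {α : Type*} [MeasurableSpace α] (P : Measure α) (f : α → Euc d)
    (hf : MemLp f 2 P) : Real.sqrt (∫ p, ‖f p‖ ^ 2 ∂P) = (eLpNorm f 2 P).toReal := by
  rw [hf.eLpNorm_eq_integral_rpow_norm (by norm_num) (by norm_num), ENNReal.toReal_ofReal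
    (by positivity), Real.sqrt_eq_rpow]
  norm_num

/-- the lifted cost `LS_θ` is non-negative, symmetric, satisfies the
triangle inequality, dominates `W₂`, and vanishes only between equal measures. -/
theorem LS_almost_distance {d : ℕ} (θ : Euc d) (hθ : ‖θ‖ = 1)
    (μ1 μ2 μ3 : Measure (Euc d))
    [IsFiniteMeasure μ1] [IsFiniteMeasure μ2] [IsFiniteMeasure μ3]
    (h1 : μ1 ∈ (P2 : Set (Measure (Euc d)))) (h2 : μ2 ∈ (P2 : Set (Measure (Euc d))))
    (h3 : μ3 ∈ (P2 : Set (Measure (Euc d)))) :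
    0 ≤ LS θ μ1 μ2 ∧
    LS θ μ1 μ2 = LS θ μ2 μ1 ∧
    LS θ μ1 μ3 ≤ LS θ μ1 μ2 + LS θ μ2 μ3 ∧
    W2 μ1 μ2 ≤ LS θ μ1 μ2 ∧
    (LS θ μ1 μ2 = 0 → μ1 = μ2) := by
  have hp1 := h1.1
  have hp2 := h2.1
  have hp3 := h3.1
  have (μ : Measure (Euc d)) [IsFiniteMeasure μ] : IsFiniteMeasure (slicePair θ μ) :=
    Measure.isFiniteMeasure_map μ _
  obtain ⟨k1, _, hq1, hk1, hb1⟩ := exists_kernel θ μ1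
  obtain ⟨k2, _, hq2, hk2, hb2⟩ := exists_kernel θ μ2
  obtain ⟨k3, _, hq3, hk3, hb3⟩ := exists_kernel θ μ3
  have e12 := liftedPlan_eq θ μ1 μ2 k1 k2 hq1 hq2 hk1 hk2
  have e21 := liftedPlan_eq θ μ2 μ1 k2 k1 hq2 hq1 hk2 hk1
  have e23 := liftedPlan_eq θ μ2 μ3 k2 k3 hq2 hq3 hk2 hk3
  have e13 := liftedPlan_eq θ μ1 μ3 k1 k3 hq1 hq3 hk1 hk3
  have m12f : (liftedPlan θ μ1 μ2).map Prod.fst = μ1 := by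
    rw [e12, Measure.map_comp _ _ measurable_fst, ← Kernel.fst_eq, Kernel.fst_prod, hb1]
  have m12s : (liftedPlan θ μ1 μ2).map Prod.snd = μ2 := by
    rw [e12, Measure.map_comp _ _ measurable_snd, ← Kernel.snd_eq, Kernel.snd_prod, hb2]
  have p12 : IsProbabilityMeasure (liftedPlan θ μ1 μ2) := by
    rw [e12]; infer_instance
  have L (μ : Measure (Euc d)) (h : μ ∈ (P2 : Set (Measure (Euc d)))) :
      MemLp (fun x : Euc d => x) 2 μ :=
    (memLp_two_iff_integrable_sq_norm (by fun_prop)).2 h.2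
  have L' {α : Type} [MeasurableSpace α] (P : Measure α) (g : α → Euc d) (hg : Measurable g)
      (h : P.map g ∈ (P2 : Set (Measure (Euc d)))) : MemLp g 2 P :=
    (memLp_map_measure_iff (by fun_prop) hg.aemeasurable).1 (L _ h)
  have l12 : MemLp (fun p : Euc d × Euc d => p.1 - p.2) 2 (liftedPlan θ μ1 μ2) :=
    (L' _ Prod.fst measurable_fst (by rwa [m12f])).sub
      (L' _ Prod.snd measurable_snd (by rwa [m12s]))
  refine ⟨Real.sqrt_nonneg _, ?_, ?_, ?_, ?_⟩
  · unfold LS LSsq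
    have hs : liftedPlan θ μ2 μ1 = (liftedPlan θ μ1 μ2).map Prod.swap := by
      rw [e12, e21, Measure.map_comp _ _ measurable_swap, Kernel.map_prod_swap]
    rw [hs, integral_map measurable_swap.aemeasurable (by fun_prop)]
    simp only [Prod.fst_swap, Prod.snd_swap]
    congr 2
    ext p
    rw [norm_sub_rev]
  · set T : Measure (Euc d × Euc d × Euc d) := UU.bind (k1 ×ₖ (k2 ×ₖ k3)) with hT
    have t12 : T.map (fun p => (p.1, p.2.1)) = liftedPlan θ μ1 μ2 := by
      rw [e12, hT, Measure.map_comp _ _ (by fun_prop)]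
      congr 1
      funext t
      rw [Kernel.map_apply _ (by fun_prop), Kernel.prod_apply, Kernel.prod_apply, Kernel.prod_apply]
      change Measure.map (Prod.map id Prod.fst) _ = _
      rw [← Measure.map_prod_map _ _ measurable_id measurable_fst, Measure.map_id,
        Measure.map_fst_prod]
      simp
    have t13 : T.map (fun p => (p.1, p.2.2)) = liftedPlan θ μ1 μ3 := by
      rw [e13, hT, Measure.map_comp _ _ (by fun_prop)]
      congr 1
      funext t
      rw [Kernel.map_apply _ (by fun_prop), Kernel.prod_apply, Kernel.prod_apply, Kernel.prod_apply]
      change Measure.map (Prod.map id Prod.snd) _ = _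
      rw [← Measure.map_prod_map _ _ measurable_id measurable_snd, Measure.map_id,
        Measure.map_snd_prod]
      simp
    have t23 : T.map Prod.snd = liftedPlan θ μ2 μ3 := by
      rw [e23, hT, Measure.map_comp _ _ measurable_snd, ← Kernel.snd_eq, Kernel.snd_prod]
    have m1 : T.map (fun p => p.1) = μ1 := by
      rw [hT, Measure.map_comp _ _ measurable_fst, ← Kernel.fst_eq, Kernel.fst_prod, hb1]
    have m2 : T.map (fun p => p.2.1) = μ2 := by
      rw [← m12s, ← t12, Measure.map_map (by fun_prop) (by fun_prop)]; rfl
    have m3 : T.map (fun p => p.2.2) = μ3 := by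
      have : (liftedPlan θ μ1 μ3).map Prod.snd = μ3 := by
        rw [e13, Measure.map_comp _ _ measurable_snd, ← Kernel.snd_eq, Kernel.snd_prod, hb3]
      rw [← this, ← t13, Measure.map_map (by fun_prop) (by fun_prop)]; rfl
    have l1 : MemLp (fun p : Euc d × Euc d × Euc d => p.1) 2 T := L' _ _ (by fun_prop) (by rwa [m1])
    have l2 : MemLp (fun p : Euc d × Euc d × Euc d => p.2.1) 2 T := L' _ _ (by fun_prop) (by rwa [m2])
    have l3 : MemLp (fun p : Euc d × Euc d × Euc d => p.2.2) 2 T := L' _ _ (by fun_prop) (by rwa [m3])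
    have l12 : MemLp (fun p : Euc d × Euc d × Euc d => p.1 - p.2.1) 2 T := l1.sub l2
    have l23 : MemLp (fun p : Euc d × Euc d × Euc d => p.2.1 - p.2.2) 2 T := l2.sub l3
    have l13 : MemLp (fun p : Euc d × Euc d × Euc d => p.1 - p.2.2) 2 T := l1.sub l3
    have c12 : LS θ μ1 μ2 = (eLpNorm (fun p : Euc d × Euc d × Euc d => p.1 - p.2.1) 2 T).toReal := by
      rw [← sqrt_eq_eLpNorm _ _ l12]
      unfold LS LSsq
      rw [← t12, integral_map (by fun_prop) (by fun_prop)]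
    have c13 : LS θ μ1 μ3 = (eLpNorm (fun p : Euc d × Euc d × Euc d => p.1 - p.2.2) 2 T).toReal := by
      rw [← sqrt_eq_eLpNorm _ _ l13]
      unfold LS LSsq
      rw [← t13, integral_map (by fun_prop) (by fun_prop)]
    have c23 : LS θ μ2 μ3 = (eLpNorm (fun p : Euc d × Euc d × Euc d => p.2.1 - p.2.2) 2 T).toReal := by
      rw [← sqrt_eq_eLpNorm _ _ l23]
      unfold LS LSsq
      rw [← t23, integral_map (by fun_prop) (by fun_prop)]
    rw [c12, c13, c23, ← ENNReal.toReal_add l12.2.ne l23.2.ne]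
    refine ENNReal.toReal_mono (ENNReal.add_ne_top.2 ⟨l12.2.ne, l23.2.ne⟩) ?_
    refine le_trans (le_of_eq ?_) (eLpNorm_add_le l12.1 l23.1 (by norm_num))
    congr 1
    ext p : 1
    simp
  · refine Real.sqrt_le_sqrt (csInf_le ⟨0, ?_⟩ ⟨liftedPlan θ μ1 μ2, ⟨p12, m12f, m12s⟩, rfl⟩)
    rintro _ ⟨π, -, rfl⟩
    exact integral_nonneg fun p => by positivity
  · intro h0
    have hc : LS θ μ1 μ2 = _ := sqrt_eq_eLpNorm _ _ l12
    rw [hc, ENNReal.toReal_eq_zero_iff, or_iff_left l12.2.ne,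
      eLpNorm_eq_zero_iff l12.1 (by norm_num)] at h0
    refine m12f.symm.trans (Eq.trans (Measure.map_congr ?_) m12s)
    filter_upwards [h0] with p hp
    exact sub_eq_zero.1 hp

end
end
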